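/- arXiv:1606.00624 — 2 statements merged into one kernel-verified Lean document; each statement's English description precedes it below -/
import Mathlib

section
/- Let u, r, s be integers with 1 ≤ u < r and u < s, and let H be the subgroup of ℤ × (ℤ/2^s) × (ℤ/2) generated by the two elements (2^r, 0 mod 2^s, 1 mod 2) and (0, 2^u mod 2^s, 1 mod 2). Then the quotient group (ℤ × (ℤ/2^s) × (ℤ/2))/H is isomorphic to (ℤ/2^{r+1}) × (ℤ/2^u). -/
/-!
Write `a, b, c` for the images in the quotient of the three standard generators. The relations say
`c = -2 ^ r a` and `2 ^ u b = -c`; as `2 c = 0`, they amount to `2 ^ (r + 1) a = 0`,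
`c = 2 ^ r a` and `2 ^ u b = 2 ^ r a` (then `2 ^ s b = 0` is automatic, because `u < s`).
Hence `b - 2 ^ (r - u) a` has order dividing `2 ^ u`, and the isomorphism is induced by
`a ↦ (1, 0)`, `b ↦ (2 ^ (r - u), 1)`, `c ↦ (2 ^ r, 0)`. This map is `presentationHom`; it is onto,
and `ker_presentationHom` identifies its kernel with the given subgroup.
-/

/-- The homomorphism `(x, y, z) ↦ (x + 2 ^ (r - u) y + 2 ^ r z, y)`, where `y` and `z` stand for
arbitrary integer representatives (see `presentationHom_apply`). -/
def presentationHom (u r s : ℕ) (hur : u < r) (hus : u < s) :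
    (ℤ × ZMod (2 ^ s) × ZMod 2) →+ (ZMod (2 ^ (r + 1)) × ZMod (2 ^ u)) :=
  AddMonoidHom.coprod
    (zmultiplesHom _ ((1 : ZMod (2 ^ (r + 1))), (0 : ZMod (2 ^ u))))
    (AddMonoidHom.coprod
      (ZMod.lift (2 ^ s)
        ⟨zmultiplesHom _ (((2 ^ (r - u) : ℕ) : ZMod (2 ^ (r + 1))), (1 : ZMod (2 ^ u))), by
          have h1 : ((2 ^ s * 2 ^ (r - u) : ℕ) : ZMod (2 ^ (r + 1))) = 0 := by
            rw [ZMod.natCast_eq_zero_iff, ← pow_add]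
            exact pow_dvd_pow 2 (by omega)
          have h2 : ((2 ^ s : ℕ) : ZMod (2 ^ u)) = 0 := by
            rw [ZMod.natCast_eq_zero_iff]
            exact pow_dvd_pow 2 hus.le
          push_cast at h1 h2
          ext <;> simp [h1, h2]⟩)
      (ZMod.lift 2
        ⟨zmultiplesHom _ (((2 ^ r : ℕ) : ZMod (2 ^ (r + 1))), (0 : ZMod (2 ^ u))), by
          have h1 : ((2 * 2 ^ r : ℕ) : ZMod (2 ^ (r + 1))) = 0 := by
            rw [ZMod.natCast_eq_zero_iff, ← pow_succ']
          push_cast at h1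
          ext <;> simp [h1]⟩))

theorem presentationHom_apply (u r s : ℕ) (hur : u < r) (hus : u < s) (x y z : ℤ) :
    presentationHom u r s hur hus (x, (y : ZMod (2 ^ s)), (z : ZMod 2)) =
      (((x + y * 2 ^ (r - u) + z * 2 ^ r : ℤ) : ZMod (2 ^ (r + 1))), (y : ZMod (2 ^ u))) := by
  simp only [presentationHom, AddMonoidHom.coprod_apply, ZMod.lift_coe]
  ext <;> simp [add_assoc]

theorem presentationHom_surjective (u r s : ℕ) (hur : u < r) (hus : u < s) :
    Function.Surjective (presentationHom u r s hur hus) := by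
  rintro ⟨a, b⟩
  obtain ⟨a, rfl⟩ := ZMod.intCast_surjective a
  obtain ⟨b, rfl⟩ := ZMod.intCast_surjective b
  refine ⟨(a - b * 2 ^ (r - u), (b : ZMod (2 ^ s)), ((0 : ℤ) : ZMod 2)), ?_⟩
  rw [presentationHom_apply]
  simp

theorem ker_presentationHom (u r s : ℕ) (hur : u < r) (hus : u < s) :
    AddSubgroup.closure
          {((2 ^ r : ℤ), (0 : ZMod (2 ^ s)), (1 : ZMod 2)),
           ((0 : ℤ), (2 ^ u : ZMod (2 ^ s)), (1 : ZMod 2))} =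
      (presentationHom u r s hur hus).ker := by
  have hpow : (2 : ℤ) ^ u * 2 ^ (r - u) = 2 ^ r := by
    rw [← pow_add]
    congr 1
    omega
  apply le_antisymm
  · have hr : ((2 ^ r + 2 ^ r : ℤ) : ZMod (2 ^ (r + 1))) = 0 := by
      rw [ZMod.intCast_zmod_eq_zero_iff_dvd]
      exact ⟨1, by push_cast; ring⟩
    have hu' : ((2 ^ u : ℤ) : ZMod (2 ^ u)) = 0 := by
      rw [ZMod.intCast_zmod_eq_zero_iff_dvd]
      exact ⟨1, by push_cast; ring⟩
    rw [AddSubgroup.closure_le]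
    rintro _ (rfl | rfl)
    · have h := presentationHom_apply u r s hur hus (2 ^ r) 0 1
      rw [zero_mul, add_zero, one_mul, hr] at h
      simpa [← Prod.zero_eq_mk] using h
    · have h := presentationHom_apply u r s hur hus 0 (2 ^ u) 1
      rw [zero_add, hpow, one_mul, hr, hu'] at h
      simpa [← Prod.zero_eq_mk] using h
  · rintro ⟨x, y, z⟩ h
    obtain ⟨y, rfl⟩ := ZMod.intCast_surjective y
    obtain ⟨z, rfl⟩ := ZMod.intCast_surjective z
    rw [AddMonoidHom.mem_ker, presentationHom_apply, Prod.mk_eq_zero,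
      ZMod.intCast_zmod_eq_zero_iff_dvd, ZMod.intCast_zmod_eq_zero_iff_dvd] at h
    push_cast at h
    obtain ⟨⟨n, hn⟩, ⟨k, rfl⟩⟩ := h
    -- The element is `m • (2 ^ r, 0, 1) + k • (0, 2 ^ u, 1)` with `m = 2 n - k - z`;
    -- the last coordinates agree because `m + k = 2 n - z`.
    rw [AddSubgroup.mem_closure_pair]
    refine ⟨2 * n - k - z, k, ?_⟩
    have hx : x = (2 * n - k - z) * 2 ^ r := by
      linear_combination hn - k * hpow
    have hz : (((2 * n - k - z) + k : ℤ) : ZMod 2) = (z : ZMod 2) := by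
      rw [ZMod.intCast_eq_intCast_iff_dvd_sub]
      exact ⟨z - n, by push_cast; ring⟩
    push_cast at hz
    ext
    · simp [hx]
    · simp [mul_comm]
    · simpa using hz


/-- For `1 ≤ u < r` and `u < s`,
`(ℤ × (ℤ/2^s) × (ℤ/2)) / ⟨(2^r, 0, 1), (0, 2^u, 1)⟩ ≅ (ℤ/2^{r+1}) × (ℤ/2^u)`. -/
theorem stmt_5 (u r s : ℕ) (hu : 1 ≤ u) (hur : u < r) (hus : u < s) :
    Nonempty (((ℤ × ZMod (2 ^ s) × ZMod 2) ⧸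
        AddSubgroup.closure
          {((2 ^ r : ℤ), (0 : ZMod (2 ^ s)), (1 : ZMod 2)),
           ((0 : ℤ), (2 ^ u : ZMod (2 ^ s)), (1 : ZMod 2))})
      ≃+ (ZMod (2 ^ (r + 1)) × ZMod (2 ^ u))) := by
  exact ⟨(QuotientAddGroup.quotientAddEquivOfEq (ker_presentationHom u r s hur hus)).trans
    (QuotientAddGroup.quotientKerEquivOfSurjective _ (presentationHom_surjective u r s hur hus))⟩
end

section
/- Let u, r, s be integers with 1 ≤ u < r and u < s, and let H be the subgroup of (ℤ/2^{r+1}) × (ℤ/2^s) generated by the single element (2^r mod 2^{r+1}, 2^u mod 2^s). Then the quotient group ((ℤ/2^{r+1}) × (ℤ/2^s))/H is isomorphic to (ℤ/2^{r+1}) × (ℤ/2^u). -/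
/-!
The homomorphism `(a, b) ↦ (a - 2^(r-u) b, b mod 2^u)` from `ℤ/2^{r+1} × ℤ/2^s` to
`ℤ/2^{r+1} × ℤ/2^u` is well defined because `r + 1 ≤ (r - u) + s`. It is surjective, and its kernel
consists of the pairs with `b = 2^u c` and `a = 2^(r-u) b = 2^r c`, that is, of the multiples
`c • (2^r, 2^u)`. The first isomorphism theorem concludes.
-/

/-- For `1 ≤ u < r` and `u < s`,
`((ℤ/2^{r+1}) × (ℤ/2^s)) / ⟨(2^r, 2^u)⟩ ≅ (ℤ/2^{r+1}) × (ℤ/2^u)`. -/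
theorem stmt_6 (u r s : ℕ) (hu : 1 ≤ u) (hur : u < r) (hus : u < s) :
    Nonempty (((ZMod (2 ^ (r + 1)) × ZMod (2 ^ s)) ⧸
        AddSubgroup.closure {((2 ^ r : ZMod (2 ^ (r + 1))), (2 ^ u : ZMod (2 ^ s)))})
      ≃+ (ZMod (2 ^ (r + 1)) × ZMod (2 ^ u))) := by
  -- multiplication by `2^(r-u)`, from `ℤ/2^s` to `ℤ/2^{r+1}`
  obtain ⟨ψ, hψ⟩ : ∃ ψ : ZMod (2 ^ s) →+ ZMod (2 ^ (r + 1)),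
      ∀ n : ℤ, ψ (n : ZMod (2 ^ s)) = 2 ^ (r - u) * (n : ZMod (2 ^ (r + 1))) := by
    refine ⟨ZMod.lift (2 ^ s) ⟨(AddMonoidHom.mulLeft (2 ^ (r - u))).comp
      (Int.castAddHom (ZMod (2 ^ (r + 1)))), ?_⟩, fun n => by simp⟩
    have h : ((2 ^ (r - u) * 2 ^ s : ℕ) : ZMod (2 ^ (r + 1))) = 0 := by
      rw [ZMod.natCast_eq_zero_iff, ← pow_add]
      exact pow_dvd_pow 2 (by omega)
    simpa using h
  let π : ZMod (2 ^ s) →+* ZMod (2 ^ u) := ZMod.castHom (pow_dvd_pow 2 hus.le) (ZMod (2 ^ u))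
  let φ : ZMod (2 ^ (r + 1)) × ZMod (2 ^ s) →+ ZMod (2 ^ (r + 1)) × ZMod (2 ^ u) :=
    (AddMonoidHom.fst _ _ - ψ.comp (AddMonoidHom.snd _ _)).prod
      (π.toAddMonoidHom.comp (AddMonoidHom.snd _ _))
  have hφ : ∀ a b, φ (a, b) = (a - ψ b, π b) := fun a b => rfl
  have hpow : (2 : ZMod (2 ^ (r + 1))) ^ (r - u) * 2 ^ u = 2 ^ r := by
    rw [← pow_add, Nat.sub_add_cancel hur.le]
  have hsurj : Function.Surjective φ := by
    rintro ⟨x, y⟩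
    obtain ⟨n, rfl⟩ := ZMod.intCast_surjective y
    exact ⟨(x + ψ n, n), by rw [hφ]; simp⟩
  have hker : AddSubgroup.closure {((2 ^ r : ZMod (2 ^ (r + 1))), (2 ^ u : ZMod (2 ^ s)))}
      = φ.ker := by
    apply le_antisymm
    · rw [AddSubgroup.closure_le, Set.singleton_subset_iff, SetLike.mem_coe,
        AddMonoidHom.mem_ker, hφ]
      have h1 := hψ (2 ^ u)
      have h2 : ((2 ^ u : ℕ) : ZMod (2 ^ u)) = 0 := ZMod.natCast_self _
      push_cast at h1 h2
      rw [h1, hpow, map_pow, map_ofNat, h2, sub_self]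
      rfl
    · rintro ⟨a, b⟩ hab
      obtain ⟨n, rfl⟩ := ZMod.intCast_surjective b
      rw [AddMonoidHom.mem_ker, hφ, Prod.mk_eq_zero, sub_eq_zero, hψ, map_intCast,
        ZMod.intCast_zmod_eq_zero_iff_dvd] at hab
      obtain ⟨rfl, c, rfl⟩ := hab
      rw [AddSubgroup.mem_closure_singleton]
      refine ⟨c, ?_⟩
      ext
      · simp [← hpow]
        ring
      · simp [mul_comm]
  exact ⟨(QuotientAddGroup.quotientAddEquivOfEq hker).trans
    (QuotientAddGroup.quotientKerEquivOfSurjective φ hsurj)⟩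
end
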